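/- Uniform positivity of the diagonal kernel in the bulk: fix θ with −√2 < θ < √2 and R > 0, and for x ∈ ℝ and N ≥ 1 write x_θ^N = x/N + θ. Then sup_{N ≥ 1} sup_{|x| < R} 1 / L^N(x_θ^N, x_θ^N) < ∞; in particular L^N(x_θ^N, x_θ^N) > 0 for all N ≥ 1 and |x| < R. -/

import Mathlib

open Real MeasureTheory Filter Set

/-- Physicists' Hermite polynomial `H_n(x) = (-1)^n e^{x^2} (d/dx)^n e^{-x^2}`. -/
noncomputable def hermiteP (n : ℕ) (x : ℝ) : ℝ :=
  (-1 : ℝ) ^ n * Real.exp (x ^ 2) * iteratedDeriv n (fun t => Real.exp (-t ^ 2)) x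

/-- Oscillator wave function `ψ_n(x) = (√π 2^n n!)^{-1/2} e^{-x^2/2} H_n(x)`. -/
noncomputable def osc (n : ℕ) (x : ℝ) : ℝ :=
  (Real.sqrt (Real.sqrt Real.pi * 2 ^ n * (n.factorial : ℝ)))⁻¹ *
    Real.exp (-x ^ 2 / 2) * hermiteP n x

/-- The kernel `K^N(x,y) = Σ_{k=0}^{N-1} ψ_k(x) ψ_k(y)`. -/
noncomputable def kerK (N : ℕ) (x y : ℝ) : ℝ :=
  ∑ k ∈ Finset.range N, osc k x * osc k y

/-- The rescaled kernel `L^N(x,y) = N^{-1/2} K^N(√N x, √N y)`. -/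
noncomputable def kerL (N : ℕ) (x y : ℝ) : ℝ :=
  (Real.sqrt (N : ℝ))⁻¹ * kerK N (Real.sqrt (N : ℝ) * x) (Real.sqrt (N : ℝ) * y)

/-!
Write `K(x) = K^N(x, x)`. The three-term recurrence gives the confluent Christoffel–Darboux formula
`K = N (ψ_N² + ψ_{N-1}²) - √(2N) x ψ_N ψ_{N-1}`, and the formulas for `ψ_n'` telescope to
`K' = -√(2N) ψ_N ψ_{N-1}`. Hence `K + (√(2N) - x) K' = N (ψ_N - ψ_{N-1})² ≥ 0`, so that
`K(x) / (√(2N) - x)` is nondecreasing on `(-∞, √(2N))`. As `K` is even, this yields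
`L^N(t, t) ≥ L^N(0, 0) (1 - |t| / √2)`. At the origin the recurrence decouples the two parities and
shows `K^N(0, 0)² ≥ (N + 1) / (3π)`. The finitely many `N` for which `x / N + θ` can leave the bulk
are covered by `K^N(y, y) ≥ ψ_0(y)²`.
-/

lemma iteratedDeriv_fun_id_mul {𝕜 : Type*} [NontriviallyNormedField 𝕜] {n : ℕ} {f : 𝕜 → 𝕜} {x : 𝕜}
    (hf : ContDiffAt 𝕜 n f x) :
    iteratedDeriv n (fun y => y * f y) x
      = x * iteratedDeriv n f x + n * iteratedDeriv (n - 1) f x := by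
  rw [iteratedDeriv_fun_mul contDiffAt_fun_id hf]
  cases n with
  | zero => simp
  | succ n =>
    rw [Finset.sum_range_succ', Finset.sum_range_succ']
    simp [iteratedDeriv_fun_id, add_comm]

lemma hasDerivAt_exp_neg_sq (x : ℝ) :
    HasDerivAt (fun t : ℝ => exp (-t ^ 2)) (-2 * (x * exp (-x ^ 2))) x :=
  (hasDerivAt_pow 2 x).neg.exp.congr_deriv (by norm_num; ring)

lemma iteratedDeriv_exp_neg_sq_succ (n : ℕ) (x : ℝ) :
    iteratedDeriv (n + 1) (fun t : ℝ => exp (-t ^ 2)) x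
      = -2 * (x * iteratedDeriv n (fun t : ℝ => exp (-t ^ 2)) x
        + n * iteratedDeriv (n - 1) (fun t : ℝ => exp (-t ^ 2)) x) := by
  have hderiv : deriv (fun t : ℝ => exp (-t ^ 2)) = fun t => -2 * (t * exp (-t ^ 2)) :=
    funext fun t => (hasDerivAt_exp_neg_sq t).deriv
  rw [iteratedDeriv_succ', hderiv, iteratedDeriv_const_mul_field,
    iteratedDeriv_fun_id_mul (by fun_prop)]

lemma hasDerivAt_iteratedDeriv_exp_neg_sq (n : ℕ) (x : ℝ) :
    HasDerivAt (iteratedDeriv n fun t : ℝ => exp (-t ^ 2))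
      (iteratedDeriv (n + 1) (fun t : ℝ => exp (-t ^ 2)) x) x := by
  have hsmooth : ContDiff ℝ (n + 1 : ℕ) fun t : ℝ => exp (-t ^ 2) := by fun_prop
  rw [iteratedDeriv_succ]
  exact (hsmooth.differentiable_iteratedDeriv n (mod_cast n.lt_succ_self) x).hasDerivAt

-- Here and below, the index `n - 1` is truncated at `n = 0`, where its term has the factor
-- `n = 0` or `√(2 * n) = 0`.
lemma hermiteP_succ (n : ℕ) (x : ℝ) :
    hermiteP (n + 1) x = 2 * x * hermiteP n x - 2 * n * hermiteP (n - 1) x := by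
  simp only [hermiteP, iteratedDeriv_exp_neg_sq_succ n]
  cases n with
  | zero => simp; ring
  | succ n => simp only [Nat.add_sub_cancel]; ring

lemma hasDerivAt_hermiteP (n : ℕ) (x : ℝ) :
    HasDerivAt (hermiteP n) (2 * x * hermiteP n x - hermiteP (n + 1) x) x := by
  have hexp : HasDerivAt (fun t : ℝ => exp (t ^ 2)) (exp (x ^ 2) * (2 * x)) x :=
    (hasDerivAt_pow 2 x).exp.congr_deriv (by norm_num)
  refine ((hexp.const_mul ((-1) ^ n)).mul (hasDerivAt_iteratedDeriv_exp_neg_sq n x)).congr_deriv ?_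
  simp only [hermiteP]
  ring

lemma hermiteP_neg (n : ℕ) (x : ℝ) : hermiteP n (-x) = (-1) ^ n * hermiteP n x := by
  have h := iteratedDeriv_comp_neg n (fun t : ℝ => exp (-t ^ 2)) (-x)
  simp only [neg_sq, neg_neg, smul_eq_mul] at h
  simp only [hermiteP, neg_sq, h]
  ring

/-- The normalising constant `(√π 2^n n!)^{-1/2}` of the oscillator wave function `ψ_n`. -/
noncomputable def oscNorm (n : ℕ) : ℝ :=
  (√(√π * 2 ^ n * n.factorial))⁻¹

lemma osc_eq_oscNorm_mul (n : ℕ) (x : ℝ) :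
    osc n x = oscNorm n * exp (-x ^ 2 / 2) * hermiteP n x := rfl

lemma sqrt_mul_oscNorm_succ (n : ℕ) : √(2 * (n + 1)) * oscNorm (n + 1) = oscNorm n := by
  have hfactor : √π * 2 ^ (n + 1) * (n + 1).factorial
      = 2 * (n + 1) * (√π * 2 ^ n * n.factorial) := by
    rw [Nat.factorial_succ]
    push_cast
    ring
  rw [oscNorm, oscNorm, hfactor, sqrt_mul (x := 2 * (n + 1 : ℝ)) (by positivity),
    mul_inv, mul_inv_cancel_left₀ (by positivity)]

lemma two_mul_mul_oscNorm (n : ℕ) : 2 * n * oscNorm n = √(2 * n) * oscNorm (n - 1) := by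
  cases n with
  | zero => simp
  | succ n =>
    rw [Nat.add_sub_cancel, ← sqrt_mul_oscNorm_succ n, ← mul_assoc]
    push_cast
    rw [mul_self_sqrt (by positivity)]

lemma sqrt_mul_osc_succ (n : ℕ) (x : ℝ) :
    √(2 * (n + 1)) * osc (n + 1) x = 2 * x * osc n x - √(2 * n) * osc (n - 1) x := by
  simp only [osc_eq_oscNorm_mul, hermiteP_succ n]
  linear_combination
    exp (-x ^ 2 / 2) * (2 * x * hermiteP n x - 2 * n * hermiteP (n - 1) x) * sqrt_mul_oscNorm_succ n
      - exp (-x ^ 2 / 2) * hermiteP (n - 1) x * two_mul_mul_oscNorm n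

lemma hasDerivAt_osc (n : ℕ) (x : ℝ) :
    HasDerivAt (osc n) (x * osc n x - √(2 * (n + 1)) * osc (n + 1) x) x := by
  have hexp : HasDerivAt (fun t : ℝ => exp (-t ^ 2 / 2)) (exp (-x ^ 2 / 2) * (-x)) x :=
    ((hasDerivAt_pow 2 x).neg.div_const 2).exp.congr_deriv (by norm_num; ring)
  refine ((hexp.const_mul (oscNorm n)).mul (hasDerivAt_hermiteP n x)).congr_deriv ?_
  rw [osc_eq_oscNorm_mul, osc_eq_oscNorm_mul, ← sqrt_mul_oscNorm_succ]
  ring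

lemma osc_neg (n : ℕ) (x : ℝ) : osc n (-x) = (-1) ^ n * osc n x := by
  rw [osc_eq_oscNorm_mul, osc_eq_oscNorm_mul, hermiteP_neg, neg_sq]
  ring

lemma osc_zero_sq (x : ℝ) : osc 0 x ^ 2 = (√π)⁻¹ * exp (-x ^ 2) := by
  have hexp : exp (-x ^ 2 / 2) ^ 2 = exp (-x ^ 2) := by
    rw [← exp_nat_mul]
    congr 1
    push_cast
    ring
  have hhermite : hermiteP 0 x = 1 := by simp [hermiteP, ← exp_add]
  rw [osc_eq_oscNorm_mul, hhermite, mul_one, mul_pow, hexp, oscNorm, inv_pow,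
    sq_sqrt (by positivity)]
  simp

lemma succ_mul_osc_succ_zero_sq (n : ℕ) :
    (n + 1) * osc (n + 1) 0 ^ 2 = n * osc (n - 1) 0 ^ 2 := by
  have h := congrArg (· ^ 2) (sqrt_mul_osc_succ n 0)
  simp only [mul_zero, zero_mul, zero_sub, neg_sq, mul_pow] at h
  rw [sq_sqrt (by positivity), sq_sqrt (by positivity)] at h
  linarith

lemma kerK_self_eq_sum_sq (N : ℕ) (x : ℝ) : kerK N x x = ∑ k ∈ Finset.range N, osc k x ^ 2 :=
  Finset.sum_congr rfl fun _ _ => (sq _).symm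

lemma kerK_self_succ (N : ℕ) (x : ℝ) : kerK (N + 1) x x = kerK N x x + osc N x ^ 2 := by
  rw [kerK_self_eq_sum_sq, kerK_self_eq_sum_sq, Finset.sum_range_succ]

lemma osc_sq_le_kerK_self {N n : ℕ} (hn : n < N) (x : ℝ) : osc n x ^ 2 ≤ kerK N x x := by
  rw [kerK_self_eq_sum_sq]
  exact Finset.single_le_sum (f := fun k => osc k x ^ 2) (fun _ _ => sq_nonneg _)
    (Finset.mem_range.2 hn)

lemma kerK_self_nonneg (N : ℕ) (x : ℝ) : 0 ≤ kerK N x x := by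
  rw [kerK_self_eq_sum_sq]
  positivity

lemma kerK_self_neg (N : ℕ) (x : ℝ) : kerK N (-x) (-x) = kerK N x x := by
  rw [kerK_self_eq_sum_sq, kerK_self_eq_sum_sq]
  refine Finset.sum_congr rfl fun k _ => ?_
  rw [osc_neg, mul_pow, pow_right_comm, neg_one_sq, one_pow, one_mul]

lemma kerK_self_abs (N : ℕ) (x : ℝ) : kerK N |x| |x| = kerK N x x := by
  rcases abs_choice x with h | h <;> rw [h]
  exact kerK_self_neg N x

lemma kerK_self_eq_christoffel_darboux (N : ℕ) (x : ℝ) :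
    kerK N x x
      = N * (osc N x ^ 2 + osc (N - 1) x ^ 2) - √(2 * N) * x * (osc N x * osc (N - 1) x) := by
  induction N with
  | zero => simp [kerK]
  | succ N ih =>
    have hrec := sqrt_mul_osc_succ N x
    have hN : √(2 * N) ^ 2 = 2 * (N : ℝ) := sq_sqrt (by positivity)
    have hN' : √(2 * (N + 1)) ^ 2 = 2 * ((N : ℝ) + 1) := sq_sqrt (by positivity)
    rw [kerK_self_succ, ih, Nat.add_sub_cancel]
    push_cast
    linear_combination
      (√(2 * N) * osc (N - 1) x - √(2 * (N + 1)) * osc (N + 1) x) / 2 * hrec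
        - osc (N - 1) x ^ 2 / 2 * hN + osc (N + 1) x ^ 2 / 2 * hN'

lemma hasDerivAt_kerK_self (N : ℕ) (x : ℝ) :
    HasDerivAt (fun y => kerK N y y) (-(√(2 * N) * (osc N x * osc (N - 1) x))) x := by
  induction N with
  | zero => simpa [kerK] using hasDerivAt_const x (0 : ℝ)
  | succ N ih =>
    simp only [kerK_self_succ]
    refine (ih.add ((hasDerivAt_osc N x).pow 2)).congr_deriv ?_
    push_cast
    linear_combination (-osc N x) * sqrt_mul_osc_succ N x

lemma hasDerivAt_kerK_self_div (N : ℕ) {x : ℝ} (hx : x ≠ √(2 * N)) :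
    HasDerivAt (fun y => kerK N y y / (√(2 * N) - y))
      (N * (osc N x - osc (N - 1) x) ^ 2 / (√(2 * N) - x) ^ 2) x := by
  have hN : √(2 * N) ^ 2 = 2 * (N : ℝ) := sq_sqrt (by positivity)
  refine ((hasDerivAt_kerK_self N x).div ((hasDerivAt_id x).const_sub _)
    (sub_ne_zero.2 hx.symm)).congr_deriv ?_
  rw [kerK_self_eq_christoffel_darboux, id]
  congr 1
  linear_combination (-(osc N x * osc (N - 1) x)) * hN

lemma monotoneOn_kerK_self_div (N : ℕ) :
    MonotoneOn (fun x => kerK N x x / (√(2 * N) - x)) (Iio √(2 * N)) := by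
  have hderiv : ∀ x ∈ Iio √(2 * N), HasDerivAt (fun y => kerK N y y / (√(2 * N) - y))
      (N * (osc N x - osc (N - 1) x) ^ 2 / (√(2 * N) - x) ^ 2) x :=
    fun x hx => hasDerivAt_kerK_self_div N (ne_of_lt hx)
  refine monotoneOn_of_hasDerivWithinAt_nonneg (convex_Iio _)
    (fun x hx => (hderiv x hx).continuousAt.continuousWithinAt)
    (fun x hx => (hderiv x (interior_subset hx)).hasDerivWithinAt) fun x _ => by positivity

lemma kerK_zero_mul_le_kerK_self_mul (N : ℕ) (x : ℝ) :
    kerK N 0 0 * (√(2 * N) - |x|) ≤ kerK N x x * √(2 * N) := by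
  rcases lt_or_ge |x| √(2 * N) with hx | hx
  · have hpos : 0 < √(2 * N) := (abs_nonneg x).trans_lt hx
    have hmono := monotoneOn_kerK_self_div N hpos hx (abs_nonneg x)
    simp only [sub_zero, kerK_self_abs] at hmono
    rwa [div_le_div_iff₀ hpos (sub_pos.2 hx)] at hmono
  · calc kerK N 0 0 * (√(2 * N) - |x|) ≤ 0 :=
          mul_nonpos_of_nonneg_of_nonpos (kerK_self_nonneg N 0) (sub_nonpos.2 hx)
      _ ≤ kerK N x x * √(2 * N) := mul_nonneg (kerK_self_nonneg N x) (sqrt_nonneg _)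

lemma add_two_mul_kerK_zero_le (N : ℕ) : (N + 2) * kerK N 0 0 ≤ (N + 1) * kerK (N + 2) 0 0 := by
  have hN : (N + 1) * osc (N + 1) 0 ^ 2 = N * osc (N - 1) 0 ^ 2 := succ_mul_osc_succ_zero_sq N
  have hN' : (N + 1 + 1) * osc (N + 2) 0 ^ 2 = (N + 1) * osc N 0 ^ 2 :=
    mod_cast succ_mul_osc_succ_zero_sq (N + 1)
  simp only [kerK_self_eq_christoffel_darboux, mul_zero, zero_mul, sub_zero,
    show N + 2 - 1 = N + 1 by rfl]
  push_cast
  linear_combination (-(N + 2 : ℝ)) * hN - (N + 1 : ℝ) * hN' + sq_nonneg (osc N 0)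

lemma inv_sqrt_pi_le_kerK_zero {N : ℕ} (hN : 0 < N) : (√π)⁻¹ ≤ kerK N 0 0 := by
  simpa [osc_zero_sq] using osc_sq_le_kerK_self hN 0

lemma add_two_le_three_pi_mul_kerK_succ_zero_sq (N : ℕ) :
    N + 2 ≤ 3 * π * kerK (N + 1) 0 0 ^ 2 := by
  have hbase (M : ℕ) : 3 ≤ 3 * π * kerK (M + 1) 0 0 ^ 2 := by
    calc (3 : ℝ) = 3 * π * (√π)⁻¹ ^ 2 := by
          rw [inv_pow, sq_sqrt pi_nonneg, mul_inv_cancel_right₀ pi_ne_zero]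
      _ ≤ 3 * π * kerK (M + 1) 0 0 ^ 2 := by
          gcongr
          exact inv_sqrt_pi_le_kerK_zero M.succ_pos
  induction N using Nat.twoStepInduction with
  | zero => exact le_trans (by norm_num) (hbase 0)
  | one => exact le_trans (by norm_num) (hbase 1)
  | more N ih _ =>
    have hstep := add_two_mul_kerK_zero_le (N + 1)
    push_cast at hstep ⊢
    refine le_of_mul_le_mul_left ?_ (by positivity : (0 : ℝ) < (N + 1 + 1) ^ 2)
    calc (N + 1 + 1 : ℝ) ^ 2 * (N + 2 + 2) ≤ (N + 1 + 2) ^ 2 * (N + 2) := by nlinarith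
      _ ≤ (N + 1 + 2) ^ 2 * (3 * π * kerK (N + 1) 0 0 ^ 2) := by gcongr
      _ = 3 * π * ((N + 1 + 2) * kerK (N + 1) 0 0) ^ 2 := by ring
      _ ≤ 3 * π * ((N + 1 + 1) * kerK (N + 1 + 2) 0 0) ^ 2 := by
          have := kerK_self_nonneg (N + 1) 0
          gcongr
      _ = (N + 1 + 1) ^ 2 * (3 * π * kerK (N + 1 + 2) 0 0 ^ 2) := by ring

lemma inv_sqrt_three_pi_le_kerL_zero {N : ℕ} (hN : 0 < N) : (√(3 * π))⁻¹ ≤ kerL N 0 0 := by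
  have hK : (N : ℝ) + 1 ≤ 3 * π * kerK N 0 0 ^ 2 := by
    obtain ⟨M, rfl⟩ := Nat.exists_eq_add_one.2 hN
    convert add_two_le_three_pi_mul_kerK_succ_zero_sq M using 1
    push_cast
    ring
  have hsqrt : √N ≤ √(3 * π) * kerK N 0 0 := by
    refine sqrt_le_iff.2 ⟨mul_nonneg (sqrt_nonneg _) (kerK_self_nonneg N 0), ?_⟩
    rw [mul_pow, sq_sqrt (by positivity)]
    linarith
  rw [kerL, mul_zero, inv_mul_eq_div, le_div_iff₀ (by positivity),
    inv_mul_le_iff₀ (by positivity)]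
  exact hsqrt

lemma kerL_zero_mul_le_kerL_self {N : ℕ} (hN : 0 < N) (t : ℝ) :
    kerL N 0 0 * (1 - |t| / √2) ≤ kerL N t t := by
  have h := kerK_zero_mul_le_kerK_self_mul N (√N * t)
  have hN' : (0 : ℝ) < √N := by positivity
  rw [sqrt_mul zero_le_two, mul_comm √2, abs_mul, abs_of_pos hN', ← mul_sub] at h
  simp only [kerL, mul_zero]
  rw [mul_assoc]
  gcongr
  rw [one_sub_div (by positivity), ← mul_div_assoc, div_le_iff₀ (by positivity)]
  refine le_of_mul_le_mul_left ?_ hN'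
  linarith

lemma gaussian_le_kerL_self {N : ℕ} (hN : 0 < N) (t : ℝ) :
    (√N)⁻¹ * ((√π)⁻¹ * exp (-(N * t ^ 2))) ≤ kerL N t t := by
  have h := osc_sq_le_kerK_self hN (√N * t)
  rw [osc_zero_sq, mul_pow, sq_sqrt N.cast_nonneg] at h
  exact mul_le_mul_of_nonneg_left h (by positivity)

lemma exists_pos_forall_le_kerL_self_of_le (N₀ : ℕ) (T : ℝ) :
    ∃ c > 0, ∀ N : ℕ, 0 < N → N ≤ N₀ → ∀ t : ℝ, |t| ≤ T → c ≤ kerL N t t := by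
  refine ⟨(√(N₀ + 1))⁻¹ * ((√π)⁻¹ * exp (-(N₀ * T ^ 2))), by positivity,
    fun N hN hNN₀ t ht => le_trans ?_ (gaussian_le_kerL_self hN t)⟩
  have hNN₀' : (N : ℝ) ≤ N₀ := by exact_mod_cast hNN₀
  have hsq : t ^ 2 ≤ T ^ 2 := sq_le_sq.2 (ht.trans (le_abs_self T))
  gcongr
  linarith

lemma exists_pos_forall_le_kerL_self_of_abs_le {r : ℝ} (hr : r < √2) :
    ∃ c > 0, ∀ N : ℕ, 0 < N → ∀ t : ℝ, |t| ≤ r → c ≤ kerL N t t := by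
  have hr' : 0 < 1 - r / √2 := sub_pos.2 ((div_lt_one (by positivity)).2 hr)
  refine ⟨(√(3 * π))⁻¹ * (1 - r / √2), by positivity, fun N hN t ht => ?_⟩
  calc (√(3 * π))⁻¹ * (1 - r / √2) ≤ kerL N 0 0 * (1 - |t| / √2) := by
        have hzero := inv_sqrt_three_pi_le_kerL_zero hN
        exact mul_le_mul hzero (by gcongr) hr'.le (le_trans (by positivity) hzero)
    _ ≤ kerL N t t := kerL_zero_mul_le_kerL_self hN t

lemma exists_pos_forall_le_kerL_self {θ : ℝ} (hθ : |θ| < √2) (R : ℝ) :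
    ∃ c > 0, ∀ N : ℕ, 0 < N → ∀ x : ℝ, |x| < R → c ≤ kerL N (x / N + θ) (x / N + θ) := by
  obtain ⟨r, hθr, hr⟩ := exists_between hθ
  obtain ⟨N₀, hN₀⟩ := exists_nat_ge (R / (r - |θ|))
  obtain ⟨c₁, hc₁, hbulk⟩ := exists_pos_forall_le_kerL_self_of_abs_le hr
  obtain ⟨c₂, hc₂, hsmall⟩ := exists_pos_forall_le_kerL_self_of_le N₀ (R + |θ|)
  refine ⟨min c₁ c₂, lt_min hc₁ hc₂, fun N hN x hx => ?_⟩
  have hN' : (1 : ℝ) ≤ N := by exact_mod_cast hN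
  have ht : |x / N + θ| ≤ |x| / N + |θ| := by
    simpa only [abs_div, Nat.abs_cast] using abs_add_le (x / N) θ
  rcases le_total N₀ N with hNN₀ | hNN₀
  · refine (min_le_left _ _).trans (hbulk N hN _ (ht.trans ?_))
    have hRN : R ≤ N * (r - |θ|) :=
      (div_le_iff₀ (sub_pos.2 hθr)).1 (hN₀.trans (by exact_mod_cast hNN₀))
    have : |x| / N ≤ r - |θ| := (div_le_iff₀' (by positivity)).2 (hx.le.trans hRN)
    linarith
  · refine (min_le_right _ _).trans (hsmall N hN hNN₀ _ (ht.trans ?_))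
    gcongr
    exact (div_le_self (abs_nonneg x) hN').trans hx.le

/-- Uniform positivity of the diagonal kernel in the bulk:
`sup_{N≥1} sup_{|x|<R} 1/L^N(x_θ^N, x_θ^N) < ∞`, and in particular
`L^N(x_θ^N, x_θ^N) > 0` there. -/
theorem diag_kernel_uniformly_positive (θ R : ℝ)
    (hθ1 : -Real.sqrt 2 < θ) (hθ2 : θ < Real.sqrt 2) (hR : 0 < R) :
    ∃ c : ℝ, ∀ N : ℕ, 1 ≤ N → ∀ x : ℝ, |x| < R →
      0 < kerL N (x / (N : ℝ) + θ) (x / (N : ℝ) + θ) ∧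
      1 / kerL N (x / (N : ℝ) + θ) (x / (N : ℝ) + θ) ≤ c := by
  obtain ⟨c, hc, hle⟩ := exists_pos_forall_le_kerL_self (abs_lt.2 ⟨hθ1, hθ2⟩) R
  refine ⟨1 / c, fun N hN x hx => ?_⟩
  have hcL := hle N hN x hx
  exact ⟨hc.trans_le hcL, one_div_le_one_div_of_le hc hcL⟩
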